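/- Let γ ≠ 0 and l be real parameters, and let c₀ be real. Suppose a, b, A solve the axisymmetric system (As0) on an interval J, with A(t) > 0 for all t ∈ J. Then the function t ↦ (b(t) − l/2) · A(t)^(−1/γ) is constant on J (equivalently, b(t) = l/2 + 𝒞 · A(t)^(1/γ) for a constant 𝒞). -/

import Mathlib

/-!
Put `u = b - l / 2`. The equations for `A` and `b` become the linear equations `A' = (-2γa) A` and
`u' = (-2a) u`, so the logarithmic derivative of `u * A ^ p` is `-2a - 2γap`, and `p = -(1 / γ)` is
the exponent for which it vanishes.
-/

theorem eq_of_convex_of_hasDerivWithinAt_zero {𝕜 E : Type*} [RCLike 𝕜] [NormedAddCommGroup E]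
    [NormedSpace 𝕜 E] {f : 𝕜 → E} {J : Set 𝕜} {s t : 𝕜} (hJ : Convex ℝ J)
    (hf : ∀ r ∈ J, HasDerivWithinAt f 0 J r) (hs : s ∈ J) (ht : t ∈ J) : f s = f t := by
  have hdist : ‖f s - f t‖ ≤ 0 * ‖s - t‖ :=
    hJ.norm_image_sub_le_of_norm_hasDerivWithin_le hf (fun _ _ ↦ norm_zero.le) ht hs
  rwa [zero_mul, norm_le_zero_iff, sub_eq_zero] at hdist

section RpowSMul

variable {E : Type*} [NormedAddCommGroup E] [NormedSpace ℝ E] {f : ℝ → ℝ} {u : ℝ → E} {J : Set ℝ}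

theorem hasDerivWithinAt_rpow_smul {t α β : ℝ} (p : ℝ)
    (hf : HasDerivWithinAt f (α * f t) J t) (hu : HasDerivWithinAt u (β • u t) J t)
    (hft : f t ≠ 0) :
    HasDerivWithinAt (fun s ↦ f s ^ p • u s) ((p * α + β) • f t ^ p • u t) J t := by
  have hpow : HasDerivWithinAt (fun s ↦ f s ^ p) (p * α * f t ^ p) J t := by
    refine (hf.rpow_const (Or.inl hft)).congr_deriv ?_
    rw [Real.rpow_sub_one hft]
    field_simp
  refine (hpow.smul hu).congr_deriv ?_
  module

theorem rpow_smul_eq_of_hasDerivWithinAt {α β : ℝ → ℝ} {p s t : ℝ} (hJ : J.OrdConnected)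
    (hf : ∀ r ∈ J, HasDerivWithinAt f (α r * f r) J r)
    (hu : ∀ r ∈ J, HasDerivWithinAt u (β r • u r) J r)
    (hf₀ : ∀ r ∈ J, f r ≠ 0) (hp : ∀ r ∈ J, p * α r + β r = 0) (hs : s ∈ J) (ht : t ∈ J) :
    f s ^ p • u s = f t ^ p • u t := by
  refine eq_of_convex_of_hasDerivWithinAt_zero (f := fun r ↦ f r ^ p • u r) hJ.convex ?_ hs ht
  intro r hr
  simpa only [hp r hr, zero_smul] using
    hasDerivWithinAt_rpow_smul p (hf r hr) (hu r hr) (hf₀ r hr)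

end RpowSMul

theorem stmt_4_general {γ l : ℝ} (hγ : γ ≠ 0) {J : Set ℝ} (hJ : J.OrdConnected) {a b A : ℝ → ℝ}
    (hA' : ∀ t ∈ J, HasDerivWithinAt A (-2 * γ * a t * A t) J t)
    (hb' : ∀ t ∈ J, HasDerivWithinAt b (-2 * a t * b t + l * a t) J t)
    (hA : ∀ t ∈ J, 0 < A t) {s t : ℝ} (hs : s ∈ J) (ht : t ∈ J) :
    (b s - l / 2) * A s ^ (-(1 / γ)) = (b t - l / 2) * A t ^ (-(1 / γ)) := by
  have hu : ∀ r ∈ J, HasDerivWithinAt (fun r ↦ b r - l / 2) ((-2 * a r) • (b r - l / 2)) J r :=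
    fun r hr ↦ ((hb' r hr).sub_const (l / 2)).congr_deriv (by rw [smul_eq_mul]; ring)
  have hexponent : ∀ r ∈ J, -(1 / γ) * (-2 * γ * a r) + -2 * a r = 0 := fun r _ ↦ by
    field_simp
    ring
  simpa only [smul_eq_mul, mul_comm] using
    rpow_smul_eq_of_hasDerivWithinAt hJ hA' hu (fun r hr ↦ (hA r hr).ne') hexponent hs ht

/-- First integral of the axisymmetric system (As0):
if `A > 0` on `J` then `(b − l/2) · A^(−1/γ)` is constant along the solution,
i.e. `b = l/2 + 𝒞 A^(1/γ)` for some constant `𝒞`. -/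
theorem stmt_4 (γ l c₀ : ℝ) (hγ : γ ≠ 0) (J : Set ℝ) (hJ : J.OrdConnected)
    (a b A : ℝ → ℝ)
    (hsol : ∀ t ∈ J,
      HasDerivAt A (-2 * γ * a t * A t) t ∧
      HasDerivAt a (-(a t) ^ 2 + (b t) ^ 2 - l * b t - 2 * c₀ * A t) t ∧
      HasDerivAt b (-2 * a t * b t + l * a t) t)
    (hA : ∀ t ∈ J, 0 < A t) :
    ∀ s ∈ J, ∀ t ∈ J,
      (b s - l / 2) * (A s) ^ (-(1 / γ)) = (b t - l / 2) * (A t) ^ (-(1 / γ)) :=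
  fun _ hs _ ht ↦ stmt_4_general hγ hJ (fun r hr ↦ (hsol r hr).1.hasDerivWithinAt)
    (fun r hr ↦ (hsol r hr).2.2.hasDerivWithinAt) hA hs ht
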